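/- Let H be a bialgebra over a field k and F = ∑F¹⊗F² ∈ H⊗H a gauge transformation with inverse F⁻¹ = ∑𝒢¹⊗𝒢². Let H_F be the twisted quasi-bialgebra (same algebra and counit, comultiplication Δ_F(h) = FΔ(h)F⁻¹, reassociator Φ_F = (1⊗F)(id⊗Δ)(F)(Δ⊗id)(F⁻¹)(F⁻¹⊗1)). Then H̄_F, the vector space H regarded as a right H_F-module by right multiplication, with comultiplication Δ̄_F(h) = ∑h₁𝒢¹ ⊗ h₂𝒢² (where Δ(h) = ∑h₁⊗h₂ is the original comultiplication) and counit ε, is a right H_F-module coalgebra, i.e. a coalgebra in the monoidal category of right H_F-modules: (Δ̄_F⊗id)(Δ̄_F(h))·Φ_F⁻¹ = (id⊗Δ̄_F)(Δ̄_F(h)), Δ̄_F(hh') = Δ̄_F(h)·Δ_F(h'), (ε⊗id)(Δ̄_F(h)) = (id⊗ε)(Δ̄_F(h)) = h, and ε(hh') = ε(h)ε(h'). -/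

import Mathlib

open TensorProduct

noncomputable section

/-- The twisted comultiplication `Δ̄_F(h) = Δ(h)·F⁻¹` on a bialgebra. -/
def twistedComul (k : Type*) [Field k] (H : Type*) [Ring H] [Bialgebra k H]
    (Finv : H ⊗[k] H) : H →ₗ[k] H ⊗[k] H :=
  (LinearMap.mulRight k Finv) ∘ₗ (Coalgebra.comul : H →ₗ[k] H ⊗[k] H)

/-- The reassociator `Φ_F = (1⊗F)(id⊗Δ)(F)(Δ⊗id)(F⁻¹)(F⁻¹⊗1)` of the twisted
quasi-bialgebra `H_F` of an ordinary bialgebra `H`. -/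
def twistedPhi (k : Type*) [Field k] (H : Type*) [Ring H] [Bialgebra k H]
    (F Finv : H ⊗[k] H) : H ⊗[k] (H ⊗[k] H) :=
  ((1 : H) ⊗ₜ[k] F) *
  ((TensorProduct.map LinearMap.id (Coalgebra.comul : H →ₗ[k] H ⊗[k] H)) F) *
  ((TensorProduct.assoc k H H H)
    ((TensorProduct.map (Coalgebra.comul : H →ₗ[k] H ⊗[k] H) LinearMap.id) Finv)) *
  ((TensorProduct.assoc k H H H) (Finv ⊗ₜ[k] (1 : H)))

section

variable {k : Type*} [Field k] {H : Type*} [Ring H] [Bialgebra k H]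

/-- `(id ⊗ Δ̄_F)(x) = (id ⊗ Δ)(x) (1 ⊗ F⁻¹)`. -/
theorem map_id_twistedComul (Finv x : H ⊗[k] H) :
    TensorProduct.map LinearMap.id (twistedComul k H Finv) x =
      Algebra.TensorProduct.map (AlgHom.id k H) (Bialgebra.comulAlgHom k H) x *
        ((1 : H) ⊗ₜ[k] Finv) := by
  induction x with
  | zero => simp
  | add x y hx hy => rw [map_add, map_add, add_mul, hx, hy]
  | tmul a b => simp [twistedComul, Algebra.TensorProduct.tmul_mul_tmul]

/-- `(Δ̄_F ⊗ id)(x) = (Δ ⊗ id)(x) (F⁻¹ ⊗ 1)`. -/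
theorem map_twistedComul_id (Finv x : H ⊗[k] H) :
    TensorProduct.map (twistedComul k H Finv) LinearMap.id x =
      Algebra.TensorProduct.map (Bialgebra.comulAlgHom k H) (AlgHom.id k H) x *
        (Finv ⊗ₜ[k] (1 : H)) := by
  induction x with
  | zero => simp
  | add x y hx hy => rw [map_add, map_add, add_mul, hx, hy]
  | tmul a b => simp [twistedComul, Algebra.TensorProduct.tmul_mul_tmul]

/-- A monoid homomorphism sending `y` to `1` sends any left inverse of `y` to `1`. -/
theorem map_eq_one_of_mul_eq_one {A B G : Type*} [Monoid A] [Monoid B] [FunLike G A B]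
    [MonoidHomClass G A B] (f : G) {x y : A} (hxy : x * y = 1) (hy : f y = 1) : f x = 1 := by
  simpa [hy] using congrArg f hxy

/-- The algebra homomorphism `ε ⊗ id : H ⊗ H → H`. -/
def counitLeft (k : Type*) [Field k] (H : Type*) [Ring H] [Bialgebra k H] :
    H ⊗[k] H →ₐ[k] H :=
  (Algebra.TensorProduct.lid k H).toAlgHom.comp
    (Algebra.TensorProduct.map (Bialgebra.counitAlgHom k H) (AlgHom.id k H))

/-- The algebra homomorphism `id ⊗ ε : H ⊗ H → H`. -/
def counitRight (k : Type*) [Field k] (H : Type*) [Ring H] [Bialgebra k H] :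
    H ⊗[k] H →ₐ[k] H :=
  (Algebra.TensorProduct.rid k k H).toAlgHom.comp
    (Algebra.TensorProduct.map (AlgHom.id k H) (Bialgebra.counitAlgHom k H))

theorem counitLeft_apply (x : H ⊗[k] H) :
    counitLeft k H x = TensorProduct.lid k H
      (TensorProduct.map (Coalgebra.counit : H →ₗ[k] k) LinearMap.id x) := rfl

theorem counitRight_apply (x : H ⊗[k] H) :
    counitRight k H x = TensorProduct.rid k H
      (TensorProduct.map LinearMap.id (Coalgebra.counit : H →ₗ[k] k) x) := rfl

theorem counitLeft_comul (h : H) : counitLeft k H (Coalgebra.comul h) = h := by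
  have := Coalgebra.rTensor_counit_comul (R := k) h
  rw [LinearMap.rTensor] at this
  rw [counitLeft_apply, this, TensorProduct.lid_tmul, one_smul]

theorem counitRight_comul (h : H) : counitRight k H (Coalgebra.comul h) = h := by
  have := Coalgebra.lTensor_counit_comul (R := k) h
  rw [LinearMap.lTensor] at this
  rw [counitRight_apply, this, TensorProduct.rid_tmul, one_smul]

theorem twistedComul_apply (Finv : H ⊗[k] H) (h : H) :
    twistedComul k H Finv h = Coalgebra.comul h * Finv := rfl

/-- The comultiplication `Δ̄_F` is coassociative up to the reassociator `Φ_F`. -/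
theorem map_id_twistedComul_mul_twistedPhi {F Finv : H ⊗[k] H} (hFinv : Finv * F = 1) (h : H) :
    TensorProduct.map LinearMap.id (twistedComul k H Finv) (twistedComul k H Finv h) *
        twistedPhi k H F Finv =
      TensorProduct.assoc k H H H
        (TensorProduct.map (twistedComul k H Finv) LinearMap.id (twistedComul k H Finv h)) := by
  let R := Algebra.TensorProduct.map (AlgHom.id k H) (Bialgebra.comulAlgHom k H)
  let L := Algebra.TensorProduct.map (Bialgebra.comulAlgHom k H) (AlgHom.id k H)
  let α := Algebra.TensorProduct.assoc k k k H H H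
  have hΦ : twistedPhi k H F Finv =
      (1 : H) ⊗ₜ[k] F * R F * α (L Finv) * α (Finv ⊗ₜ[k] (1 : H)) := rfl
  have hcoassoc : α (L (Coalgebra.comul h)) = R (Coalgebra.comul h) :=
    Coalgebra.coassoc_apply h
  have hone : ((1 : H) ⊗ₜ[k] Finv) * ((1 : H) ⊗ₜ[k] F) = 1 := by
    rw [Algebra.TensorProduct.tmul_mul_tmul, hFinv, one_mul]
    rfl
  have hR : R Finv * R F = 1 := by rw [← map_mul, hFinv, map_one]
  have hL : TensorProduct.assoc k H H H
      (TensorProduct.map (twistedComul k H Finv) LinearMap.id (twistedComul k H Finv h)) =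
      R (Coalgebra.comul h) * α (L Finv) * α (Finv ⊗ₜ[k] (1 : H)) := by
    rw [map_twistedComul_id, twistedComul_apply, ← hcoassoc, ← map_mul, ← map_mul, ← map_mul]
    rfl
  rw [hL, hΦ, map_id_twistedComul, twistedComul_apply]
  change R (Coalgebra.comul h * Finv) * _ * _ = _
  rw [map_mul]
  calc
    _ = R (Coalgebra.comul h) * (R Finv * (((1 : H) ⊗ₜ[k] Finv) * ((1 : H) ⊗ₜ[k] F)) * R F) *
          α (L Finv) * α (Finv ⊗ₜ[k] (1 : H)) := by simp only [mul_assoc]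
    _ = _ := by rw [hone, mul_one, hR, mul_one]

end

/-- Let `H` be a bialgebra and `F` a gauge transformation with
inverse `F⁻¹ = ∑𝒢¹⊗𝒢²`. Then `H̄_F`, i.e. `H` viewed as a right `H_F`-module by
right multiplication, with comultiplication `Δ̄_F(h) = ∑ h₁𝒢¹ ⊗ h₂𝒢²` and counit
`ε`, is a coalgebra in the monoidal category of right `H_F`-modules. -/
theorem twisted_bialgebra_right_module_coalgebra
    {k : Type*} [Field k] {H : Type*} [Ring H] [Bialgebra k H]
    (F Finv : H ⊗[k] H)
    (hF : F * Finv = 1) (hFinv : Finv * F = 1)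
    (hnorm1 : (TensorProduct.lid k H)
      ((TensorProduct.map (Coalgebra.counit : H →ₗ[k] k) LinearMap.id) F) = 1)
    (hnorm2 : (TensorProduct.rid k H)
      ((TensorProduct.map LinearMap.id (Coalgebra.counit : H →ₗ[k] k)) F) = 1)
    (PhiFinv : H ⊗[k] (H ⊗[k] H))
    (hPhi : twistedPhi k H F Finv * PhiFinv = 1)
    (hPhi' : PhiFinv * twistedPhi k H F Finv = 1) :
    (∀ h : H,
      ((TensorProduct.assoc k H H H)
          ((TensorProduct.map (twistedComul k H Finv) LinearMap.id)
            (twistedComul k H Finv h))) * PhiFinv =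
        (TensorProduct.map LinearMap.id (twistedComul k H Finv))
          (twistedComul k H Finv h)) ∧
    (∀ h h' : H,
      twistedComul k H Finv (h * h') =
        twistedComul k H Finv h * (F * (Coalgebra.comul : H →ₗ[k] H ⊗[k] H) h' * Finv)) ∧
    (∀ h : H, (TensorProduct.lid k H)
      ((TensorProduct.map (Coalgebra.counit : H →ₗ[k] k) LinearMap.id)
        (twistedComul k H Finv h)) = h) ∧
    (∀ h : H, (TensorProduct.rid k H)
      ((TensorProduct.map LinearMap.id (Coalgebra.counit : H →ₗ[k] k))
        (twistedComul k H Finv h)) = h) ∧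
    (∀ h h' : H, (Coalgebra.counit : H →ₗ[k] k) (h * h') =
      Coalgebra.counit h * Coalgebra.counit h') := by
  refine ⟨fun h => ?_, fun h h' => ?_, fun h => ?_, fun h => ?_, Bialgebra.counit_mul⟩
  · rw [← map_id_twistedComul_mul_twistedPhi hFinv, mul_assoc, hPhi, mul_one]
  · rw [twistedComul_apply, twistedComul_apply, Bialgebra.comul_mul, mul_assoc F, mul_assoc,
      mul_assoc, ← mul_assoc Finv, hFinv, one_mul]
  · rw [← counitLeft_apply, twistedComul_apply, map_mul, counitLeft_comul,
      map_eq_one_of_mul_eq_one _ hFinv hnorm1, mul_one]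
  · rw [← counitRight_apply, twistedComul_apply, map_mul, counitRight_comul,
      map_eq_one_of_mul_eq_one _ hFinv hnorm2, mul_one]
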